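/- arXiv:2104.02118 — 6 statements merged into one kernel-verified Lean document; each statement's English description precedes it below -/
import Mathlib

section
/- Let G be a finite tree on vertex type V with root r and a fixed edge orientation. Let A be the reduced oriented incidence matrix of (G, r) over ℂ, with rows indexed by the edges of G and columns indexed by the vertices other than r. Define the matrix B over ℂ, with rows indexed by the vertices other than r and columns indexed by the edges, by: B(v, e) = 1 if the unique path from v to r traverses e forward, B(v, e) = −1 if it traverses e backward, and B(v, e) = 0 if e does not lie on that path. Then B * A is the identity matrix (indexed by vertices other than r) and A * B is the identity matrix (indexed by edges); in particular A is invertible with inverse B. -/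
/-!
The row of `B` at `v` is the signed indicator of the path from `v` to `r`. Pairing such a signed
indicator with the coboundary `e ↦ f (tail e) - f (head e)` of a vertex function `f` telescopes
along the path to `f v - f r` (`sum_signed_path`). The column of `A` at `w ≠ r` is the coboundary
of the indicator function of `w`, which vanishes at `r`; hence `(B * A) v w` is the value at `v` of
that indicator, i.e. `B * A = 1`. A tree has one edge fewer than it has vertices, so `A` and `B`
are square up to reindexing, and a one-sided inverse is two-sided.
-/

open SimpleGraph Matrix
open scoped Classical

/-- Telescoping: the signed indicator of a path from `u` to `r`, paired with the coboundary of `f`,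
gives `f u - f r`. The path hypothesis ensures that no edge is traversed twice, so that the signed
indicator really is the signed count of traversals. -/
theorem sum_signed_path {V : Type*} [DecidableEq V] (G : SimpleGraph V) [Fintype G.edgeSet]
    (tail head : G.edgeSet → V)
    (hadj : ∀ e : G.edgeSet, G.Adj (tail e) (head e))
    (horient : ∀ e : G.edgeSet, (e : Sym2 V) = s(tail e, head e))
    (f : V → ℂ) {u r : V} (p : G.Walk u r) (hp : p.IsPath) :
    ∑ e : G.edgeSet,
      (if (⟨(tail e, head e), hadj e⟩ : G.Dart) ∈ p.darts then (1 : ℂ)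
        else if (⟨(head e, tail e), (hadj e).symm⟩ : G.Dart) ∈ p.darts then -1
        else 0) * (f (tail e) - f (head e)) = f u - f r := by
  induction p with
  | nil => simp
  | @cons u w r h p ih =>
    have hnot : s(u, w) ∉ p.edges := ((Walk.isTrail_cons h p).1 hp.isTrail).2
    have ih := ih hp.of_cons
    -- Prepending `u → w` changes only the summand of the edge `s(u, w)`, from `0` to `f u - f w`.
    have key : ∀ e : G.edgeSet,
        (if (⟨(tail e, head e), hadj e⟩ : G.Dart) ∈ (Walk.cons h p).darts then (1 : ℂ)
          else if (⟨(head e, tail e), (hadj e).symm⟩ : G.Dart) ∈ (Walk.cons h p).darts then -1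
          else 0) * (f (tail e) - f (head e)) =
        (if (⟨(tail e, head e), hadj e⟩ : G.Dart) ∈ p.darts then (1 : ℂ)
          else if (⟨(head e, tail e), (hadj e).symm⟩ : G.Dart) ∈ p.darts then -1
          else 0) * (f (tail e) - f (head e)) +
        if e = ⟨s(u, w), h⟩ then f u - f w else 0 := by
      intro e
      have h1 : (⟨(tail e, head e), hadj e⟩ : G.Dart) ∈ p.darts → s(tail e, head e) ∈ p.edges :=
        fun hd => List.mem_map_of_mem (f := Dart.edge) hd
      have h2 : (⟨(head e, tail e), (hadj e).symm⟩ : G.Dart) ∈ p.darts →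
          s(tail e, head e) ∈ p.edges :=
        fun hd => Sym2.eq_swap (a := head e) ▸ List.mem_map_of_mem (f := Dart.edge) hd
      simp only [Walk.darts_cons, List.mem_cons, Dart.ext_iff, Prod.mk.injEq, Subtype.ext_iff]
      rw [horient e]
      by_cases he : s(tail e, head e) = s(u, w)
      · rw [he] at h1 h2
        have h1' := mt h1 hnot
        have h2' := mt h2 hnot
        rcases Sym2.eq_iff.1 he with ⟨ha, hb⟩ | ⟨ha, hb⟩
        · simp only [h1', h2', or_false, if_false]
          simp [ha, hb]
        · simp only [h1', h2', or_false, if_false]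
          simp [ha, hb, h.ne.symm]
      · have h3 : ¬ (tail e = u ∧ head e = w) := fun hh => he (by rw [hh.1, hh.2])
        have h4 : ¬ (head e = u ∧ tail e = w) := fun hh => he (by rw [hh.1, hh.2, Sym2.eq_swap])
        simp only [he, h3, h4, if_false, false_or, add_zero]
    rw [Finset.sum_congr rfl fun e _ => key e, Finset.sum_add_distrib, ih]
    simp

/-- **Inverse of the reduced oriented incidence matrix of a rooted tree.**
If `G` is a finite tree with root `r` and a fixed edge orientation (given by
`tail`/`head`), `A` is its reduced oriented incidence matrix over `ℂ`, and `B`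
is the matrix whose `(v, e)` entry is `1`/`-1`/`0` according to whether the
unique path from `v` to `r` traverses `e` forward/backward/not at all, then
`B * A = 1` and `A * B = 1`; in particular `A` is invertible with inverse `B`. -/
theorem reduced_incidence_inverse
    {V : Type*} [Fintype V] [DecidableEq V]
    (G : SimpleGraph V) (hG : G.IsTree) (r : V)
    [Fintype G.edgeSet]
    (tail head : G.edgeSet → V)
    (hadj : ∀ e : G.edgeSet, G.Adj (tail e) (head e))
    (horient : ∀ e : G.edgeSet, (e : Sym2 V) = s(tail e, head e))
    (P : ∀ v : V, G.Path v r)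
    (A : Matrix G.edgeSet {v : V // v ≠ r} ℂ)
    (hA : ∀ (e : G.edgeSet) (v : {v : V // v ≠ r}),
      A e v = if (v : V) = tail e then 1 else if (v : V) = head e then -1 else 0)
    (B : Matrix {v : V // v ≠ r} G.edgeSet ℂ)
    (hB : ∀ (v : {v : V // v ≠ r}) (e : G.edgeSet),
      B v e =
        if (⟨(tail e, head e), hadj e⟩ : G.Dart) ∈ (P (v : V)).val.darts then 1
        else if (⟨(head e, tail e), (hadj e).symm⟩ : G.Dart) ∈ (P (v : V)).val.darts then -1
        else 0) :
    B * A = 1 ∧ A * B = 1 := by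
  have hBA : B * A = 1 := by
    ext v w
    have hs := sum_signed_path G tail head hadj horient
      (fun x => if (w : V) = x then (1 : ℂ) else 0) (P v).val (P v).property
    rw [Matrix.mul_apply, Matrix.one_apply]
    have hw : (if (w : V) = r then (1 : ℂ) else 0) = 0 := if_neg w.property
    simp only [hw, sub_zero] at hs
    have hvw : (if v = w then (1 : ℂ) else 0) = if (w : V) = v then 1 else 0 := by
      simp only [Subtype.ext_iff, eq_comm]
    rw [hvw, ← hs]
    refine Finset.sum_congr rfl fun e _ => ?_
    rw [hB, hA]
    congr 1
    have hne := (hadj e).ne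
    by_cases h1 : (w : V) = tail e
    · simp [h1, hne]
    · by_cases h2 : (w : V) = head e <;> simp [h1, h2, hne.symm]
  refine ⟨hBA, ?_⟩
  have hcard : Fintype.card {v : V // v ≠ r} = Fintype.card G.edgeSet := by
    have h1 := hG.card_edgeFinset
    rw [SimpleGraph.edgeFinset_card] at h1
    have h2 : Fintype.card {v : V // v ≠ r} = Fintype.card V - 1 := by simp
    omega
  exact (Matrix.mul_eq_one_comm_of_card_eq _ _ _ hcard).1 hBA
end

section
/- Let G be a finite tree on vertex type V with root r and a fixed edge orientation, and let A be the reduced oriented incidence matrix of (G, r) over ℂ. Then the linear map x ↦ A.mulVec x, from functions on the vertices other than r (with values in ℂ) to functions on the edges of G (with values in ℂ), is bijective. -/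
open SimpleGraph Matrix

/-!
Extend `x` to all of `V` by the value `0` at the root. Then `(A x) e` is the difference of the
extended function at the two ends of `e` (`reduced_incidence_mulVec_apply`). If `A x = 0`, the
extension is constant along edges, hence constant because `G` is connected, hence equal to its
value `0` at `r`; so `A` is injective. A tree has one edge fewer than it has vertices, so both
spaces have the same dimension and injectivity gives surjectivity.
-/

/-- The extension of a function on the non-root vertices by `0` at the root. -/
noncomputable def extendRoot {V : Type*} [DecidableEq V] {r : V}
    (x : {v : V // v ≠ r} → ℂ) (v : V) : ℂ :=
  if h : v ≠ r then x ⟨v, h⟩ else 0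

lemma sum_ite_eq_extendRoot {V : Type*} [Fintype V] [DecidableEq V] {r : V}
    (x : {v : V // v ≠ r} → ℂ) (w : V) :
    ∑ v : {v : V // v ≠ r}, (if (v : V) = w then x v else 0) = extendRoot x w := by
  unfold extendRoot
  split_ifs with h
  · rw [Finset.sum_eq_single ⟨w, h⟩]
    · simp
    · intro b _ hb
      exact if_neg fun hw => hb (Subtype.ext hw)
    · simp
  · refine Finset.sum_eq_zero fun v _ => if_neg fun hv => h ?_
    exact hv ▸ v.2

lemma reduced_incidence_mulVec_apply {V E : Type*} [Fintype V] [DecidableEq V] {r : V}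
    (tail head : E → V) (hne : ∀ e, tail e ≠ head e)
    (A : Matrix E {v : V // v ≠ r} ℂ)
    (hA : ∀ (e : E) (v : {v : V // v ≠ r}),
      A e v = if (v : V) = tail e then 1 else if (v : V) = head e then -1 else 0)
    (x : {v : V // v ≠ r} → ℂ) (e : E) :
    (A.mulVec x) e = extendRoot x (tail e) - extendRoot x (head e) := by
  rw [← sum_ite_eq_extendRoot, ← sum_ite_eq_extendRoot, ← Finset.sum_sub_distrib]
  refine Finset.sum_congr rfl fun v _ => ?_
  have := hne e
  change A e v * x v = _
  rw [hA]
  split_ifs with h₁ h₂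
  · exact absurd (h₁.symm.trans h₂) this
  all_goals simp

/-- **Invertibility of the reduced oriented incidence matrix of a rooted tree.**
If `G` is a finite tree with root `r` and a fixed edge orientation, and `A` is
its reduced oriented incidence matrix over `ℂ` (rows indexed by edges, columns
by vertices other than `r`), then `x ↦ A.mulVec x` is a bijection from
functions on the non-root vertices to functions on the edges. -/
theorem reduced_incidence_mulVec_bijective
    {V : Type*} [Fintype V] [DecidableEq V]
    (G : SimpleGraph V) (hG : G.IsTree) (r : V)
    [Fintype G.edgeSet]
    (tail head : G.edgeSet → V)
    (hadj : ∀ e : G.edgeSet, G.Adj (tail e) (head e))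
    (horient : ∀ e : G.edgeSet, (e : Sym2 V) = s(tail e, head e))
    (A : Matrix G.edgeSet {v : V // v ≠ r} ℂ)
    (hA : ∀ (e : G.edgeSet) (v : {v : V // v ≠ r}),
      A e v = if (v : V) = tail e then 1 else if (v : V) = head e then -1 else 0) :
    Function.Bijective (A.mulVec : ({v : V // v ≠ r} → ℂ) → (G.edgeSet → ℂ)) := by
  have hinj : Function.Injective A.mulVecLin := by
    rw [injective_iff_map_eq_zero]
    intro x hx
    have hstep : ∀ u v, G.Adj u v → extendRoot x u = extendRoot x v := by
      intro u v huv
      let e : G.edgeSet := ⟨s(u, v), huv⟩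
      have he : extendRoot x (tail e) = extendRoot x (head e) := by
        rw [← sub_eq_zero,
          ← reduced_incidence_mulVec_apply tail head (fun e => (hadj e).ne) A hA x e]
        exact congrFun hx e
      have hor : s(u, v) = s(tail e, head e) := horient e
      rcases Sym2.eq_iff.1 hor with ⟨h₁, h₂⟩ | ⟨h₁, h₂⟩
      · rw [h₁, h₂, he]
      · rw [h₁, h₂, he]
    have hwalk : ∀ u v, G.Walk u v → extendRoot x u = extendRoot x v := by
      intro u v p
      induction p with
      | nil => rfl
      | cons h _ ih => exact (hstep _ _ h).trans ih
    funext v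
    obtain ⟨p⟩ := hG.connected.preconnected v r
    simpa [extendRoot, v.2] using hwalk _ _ p
  have hdim : Module.finrank ℂ ({v : V // v ≠ r} → ℂ) = Module.finrank ℂ (G.edgeSet → ℂ) := by
    have hcard := hG.card_edgeFinset
    rw [edgeFinset_card] at hcard
    rw [Module.finrank_fintype_fun_eq_card, Module.finrank_fintype_fun_eq_card,
      Fintype.card_subtype_compl, Fintype.card_subtype_eq]
    omega
  exact ⟨hinj, (LinearMap.injective_iff_surjective_of_finrank_eq_finrank hdim).1 hinj⟩
end

section
/- Let G be a finite tree on vertex type V with root r and a fixed edge orientation, let A be the reduced oriented incidence matrix of (G, r) over ℂ, and let y assign to each edge e a nonzero complex number y(e). Define Y = Aᵀ * diagonal(y) * A, a square matrix indexed by the vertices other than r. Define the matrix Z, indexed by the vertices other than r, by Z(i, j) = Σ over edges e lying on both the unique path from i to r and the unique path from j to r of (y(e))⁻¹. Then Z * Y = 1 and Y * Z = 1; in particular Y is invertible and, for all vertices i, j ≠ r, Y⁻¹(i, j) equals the sum of the reciprocals (y(e))⁻¹ over the edges e of the common portion of the paths from i and from j back to the root r. -/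
/-!
Let `B i e` be the signed indicator of `e` lying on the path from `i` to `r`,
with sign `+1` when the path from `tail e` to `r` uses `e`, and `-1` otherwise. Then
`Z = B * diagonal y⁻¹ * Bᵀ`, so everything follows once `A` and `B` are known to be mutually
inverse.

Row `e` of `A * B` is the difference of the rows of `B` at `tail e` and `head e`. In a tree, the
paths to `r` from two adjacent vertices differ by exactly the edge joining them
(`mem_edges_path_of_adj`), so this row is the standard basis vector at `e`, i.e. `A * B = 1`.
A tree has one edge fewer than vertices, so `A` is square up to reindexing and `B * A = 1` as well.
-/

open SimpleGraph Matrix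
open scoped Classical

/-- If the path from `v` to `r` avoids its neighbour `u`, then the path from `u` to `r` is obtained
by prepending the edge `uv`. -/
lemma edges_path_of_not_mem_support {V : Type*} {G : SimpleGraph V} (hG : G.IsTree) {r u v : V}
    (P : ∀ v : V, G.Path v r) (h : G.Adj u v) (hu : u ∉ (P v).val.support) :
    (P u).val.edges = s(u, v) :: (P v).val.edges := by
  have hp : (Walk.cons h (P v).val).IsPath := (P v).2.cons hu
  have := (hG.isAcyclic.subsingleton_path u r).elim (P u) ⟨_, hp⟩
  rw [this]
  simp

/-- In a tree, the paths to `r` from two adjacent vertices `u`, `v` differ by exactly the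
edge `uv`. -/
lemma mem_edges_path_of_adj {V : Type*} {G : SimpleGraph V} (hG : G.IsTree) {r u v : V}
    (P : ∀ v : V, G.Path v r) (h : G.Adj u v) :
    (s(u, v) ∈ (P u).val.edges ↔ s(u, v) ∉ (P v).val.edges) ∧
      ∀ f ≠ s(u, v), (f ∈ (P u).val.edges ↔ f ∈ (P v).val.edges) := by
  by_cases hu : u ∈ (P v).val.support
  · have hv : v ∉ (P u).val.support := by
      simpa using hG.isAcyclic.ne_mem_support_of_support_of_adj_of_isPath
        (P v).2.reverse (P u).2.reverse h.symm (by simpa using hu)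
    have hE := edges_path_of_not_mem_support hG P h.symm hv
    have hn : s(u, v) ∉ (P u).val.edges := fun hm => hv (Walk.snd_mem_support_of_mem_edges _ hm)
    rw [hE, Sym2.eq_swap]
    rw [Sym2.eq_swap] at hn
    simp +contextual [hn]
  · have hE := edges_path_of_not_mem_support hG P h hu
    have hn : s(u, v) ∉ (P v).val.edges := fun hm => hu (Walk.fst_mem_support_of_mem_edges _ hm)
    rw [hE]
    simp +contextual [hn]

/-- **Inverse of a weighted reduced Laplacian of a rooted tree (single phase).**
If `G` is a finite tree with root `r`, `A` its reduced oriented incidence matrix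
over `ℂ`, `y` assigns a nonzero admittance to each edge, and
`Y = Aᵀ * diagonal y * A`, then the matrix `Z` whose `(i, j)` entry is the sum
of `(y e)⁻¹` over the edges `e` on the common portion of the unique paths from
`i` and from `j` to the root `r` satisfies `Z * Y = 1` and `Y * Z = 1`; in
particular `Y` is invertible with `Y⁻¹ = Z`. -/
theorem reduced_laplacian_inverse_common_path
    {V : Type*} [Fintype V] [DecidableEq V]
    (G : SimpleGraph V) (hG : G.IsTree) (r : V)
    [Fintype G.edgeSet]
    (tail head : G.edgeSet → V)
    (hadj : ∀ e : G.edgeSet, G.Adj (tail e) (head e))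
    (horient : ∀ e : G.edgeSet, (e : Sym2 V) = s(tail e, head e))
    (P : ∀ v : V, G.Path v r)
    (A : Matrix G.edgeSet {v : V // v ≠ r} ℂ)
    (hA : ∀ (e : G.edgeSet) (v : {v : V // v ≠ r}),
      A e v = if (v : V) = tail e then 1 else if (v : V) = head e then -1 else 0)
    (y : G.edgeSet → ℂ) (hy : ∀ e, y e ≠ 0)
    (Y : Matrix {v : V // v ≠ r} {v : V // v ≠ r} ℂ)
    (hY : Y = Aᵀ * Matrix.diagonal y * A)
    (Z : Matrix {v : V // v ≠ r} {v : V // v ≠ r} ℂ)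
    (hZ : ∀ i j : {v : V // v ≠ r},
      Z i j = ∑ e : G.edgeSet,
        if (e : Sym2 V) ∈ (P (i : V)).val.edges ∧ (e : Sym2 V) ∈ (P (j : V)).val.edges
        then (y e)⁻¹ else 0) :
    Z * Y = 1 ∧ Y * Z = 1 ∧ Y⁻¹ = Z := by
  set σ : G.edgeSet → ℂ := fun e => if (e : Sym2 V) ∈ (P (tail e)).val.edges then 1 else -1
    with hσ
  -- `b` extends `B` by the row of the root, which vanishes because the path from `r` is trivial.
  set b : V → G.edgeSet → ℂ := fun v e => if (e : Sym2 V) ∈ (P v).val.edges then σ e else 0 with hb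
  set B : Matrix {v : V // v ≠ r} G.edgeSet ℂ := Matrix.of fun i e => b i e with hB
  have hbr : ∀ e, b r e = 0 := by
    intro e
    have : P r = Path.nil := (hG.isAcyclic.subsingleton_path r r).elim _ _
    simp [hb, this]
  have hσσ : ∀ e, σ e * σ e = 1 := by
    intro e
    simp only [hσ]
    split_ifs <;> norm_num
  have hAB : A * B = 1 := by
    ext e f
    have hrow : (A * B) e f = b (tail e) f - b (head e) f := by
      have hne : head e ≠ tail e := (hadj e).ne'
      have h1 : (A * B) e f = ∑ v : {v : V // v ≠ r},
          (if (v : V) = tail e then 1 else if (v : V) = head e then -1 else 0) * b v f := by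
        simp [Matrix.mul_apply, hA, hB]
      have h2 := Fintype.sum_subtype_add_sum_subtype (fun v : V => v ≠ r) (fun v : V =>
          (if v = tail e then (1 : ℂ) else if v = head e then -1 else 0) * b v f)
      have h3 : ∑ v : {v : V // ¬ v ≠ r},
          (if (v : V) = tail e then (1 : ℂ) else if (v : V) = head e then -1 else 0) * b v f
            = 0 := by
        refine Finset.sum_eq_zero fun v _ => ?_
        rw [not_not.mp v.2, hbr, mul_zero]
      rw [h3, add_zero] at h2
      rw [h1, h2]
      have h4 : ∀ v : V,
          (if v = tail e then (1 : ℂ) else if v = head e then -1 else 0) * b v f =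
          (if v = tail e then b v f else 0) - (if v = head e then b v f else 0) := by
        intro v
        by_cases hv : v = tail e
        · subst hv
          simp [hne.symm]
        · by_cases hv' : v = head e <;> simp [hv, hv', hne]
      simp [h4, Finset.sum_sub_distrib]
    rw [hrow]
    obtain ⟨hd, hs⟩ := mem_edges_path_of_adj hG P (hadj e)
    rw [← horient e] at hd hs
    by_cases hef : e = f
    · subst hef
      by_cases hm : (e : Sym2 V) ∈ (P (head e)).val.edges
      · simp [hb, hσ, hd, hm]
      · simp [hb, hσ, hd, hm]
    · have := hs f (fun h => hef (Subtype.ext h.symm))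
      simp [hb, this, hef]
  have hcard : Fintype.card G.edgeSet = Fintype.card {v : V // v ≠ r} := by
    have h := hG.card_edgeFinset
    rw [← SimpleGraph.edgeFinset_card]
    rw [Fintype.card_subtype_compl, Fintype.card_subtype_eq]
    omega
  have hBA : B * A = 1 := (Matrix.mul_eq_one_comm_of_card_eq _ _ _ hcard).mp hAB
  have hZB : Z = B * Matrix.diagonal (fun e => (y e)⁻¹) * Bᵀ := by
    ext i j
    rw [hZ, Matrix.mul_apply]
    refine Finset.sum_congr rfl fun e _ => ?_
    rw [Matrix.mul_diagonal, Matrix.transpose_apply]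
    simp only [hB, Matrix.of_apply, hb]
    by_cases h1 : (e : Sym2 V) ∈ (P (i : V)).val.edges <;>
      by_cases h2 : (e : Sym2 V) ∈ (P (j : V)).val.edges <;> simp [h1, h2]
    rw [mul_right_comm, hσσ, one_mul]
  have hDD : Matrix.diagonal y * Matrix.diagonal (fun e => (y e)⁻¹) = 1 := by
    simp [Matrix.diagonal_mul_diagonal, hy]
  have hYZ : Y * Z = 1 := by
    calc Y * Z = Aᵀ * (Matrix.diagonal y * (A * B) * Matrix.diagonal (fun e => (y e)⁻¹)) * Bᵀ := by
          rw [hY, hZB]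
          simp only [Matrix.mul_assoc]
      _ = (B * A)ᵀ := by rw [hAB, Matrix.mul_one, hDD, Matrix.mul_one, Matrix.transpose_mul]
      _ = 1 := by rw [hBA, Matrix.transpose_one]
  exact ⟨mul_eq_one_comm.mp hYZ, hYZ, Matrix.inv_eq_right_inv hYZ⟩
end

section
/- Let G be a finite tree on vertex type V with root r and a fixed edge orientation, let A be the reduced oriented incidence matrix of (G, r) over ℂ, let d be a natural number, and let y assign to each edge e an invertible matrix y(e) in the d × d complex matrices. Let Â be the Kronecker product of A with the d × d identity (rows indexed by edge–phase pairs, columns by vertex–phase pairs with vertex ≠ r), let D be the block-diagonal matrix indexed by edge–phase pairs with D((e, φ), (e, ψ)) = (y(e))(φ, ψ) and all off-edge blocks zero, and set Y = Âᵀ * D * Â. Define the matrix Z, indexed by vertex–phase pairs (v, φ) with v ≠ r, by Z((i, φ), (j, ψ)) = Σ over edges e lying on both the unique path from i to r and the unique path from j to r of the (φ, ψ) entry of (y(e))⁻¹. Then Z * Y = 1 and Y * Z = 1; in particular Y is invertible and its inverse has (i, j) block equal to the sum of the inverse matrices (y(e))⁻¹ over the edges e of the common path of i and j back to the root. -/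
open SimpleGraph Matrix
open scoped Classical

/-!
The reduced incidence matrix `A` of a rooted tree is square and invertible, with an explicit inverse:
the signed path matrix `B`, where `B v e` is `±1` if the edge `e` lies on the path from `v` to the
root and `0` otherwise. The sign depends on `e` only: it is `1` if the tail of `e` is the endpoint
farther from the root, and `-1` otherwise. Adjacent vertices have root paths that differ exactly by
the edge joining them (`edges_path_of_adj`), which gives `A * B = 1`; as a tree has one edge fewer
than vertices, `B * A = 1` follows.

Since the signs square to `1`, `Z = B̂ * D⁻¹ * B̂ᵀ` with `B̂ = B ⊗ₖ 1`, where `D⁻¹` is block diagonal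
with blocks `(y e)⁻¹`. Hence `Y * Z = Âᵀ * D * (Â * B̂) * D⁻¹ * B̂ᵀ = (B̂ * Â)ᵀ = 1`.
-/

/-- Of two adjacent vertices of a tree, one is the parent of the other: its path to the root is the
other one's path with the joining edge removed from the front. -/
lemma edges_path_of_adj {V : Type*} {G : SimpleGraph V} (hG : G.IsTree) {r : V}
    (P : ∀ v : V, G.Path v r) {t h : V} (hth : G.Adj t h) :
    (P t).val.edges = s(t, h) :: (P h).val.edges ∨
      (P h).val.edges = s(t, h) :: (P t).val.edges := by
  by_cases hs : t ∈ (P h).val.support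
  · right
    -- The path from `h` passes through `t`; by uniqueness it is the edge `ht` followed by `P t`.
    have h1 : (⟨(P h).val.takeUntil t hs, (P h).2.takeUntil hs⟩ : G.Path h t)
        = Path.singleton hth.symm := (hG.isAcyclic.subsingleton_path h t).elim _ _
    have h2 : (⟨(P h).val.dropUntil t hs, (P h).2.dropUntil hs⟩ : G.Path t r)
        = P t := (hG.isAcyclic.subsingleton_path t r).elim _ _
    have h1' := congrArg (fun p : G.Path h t => p.val.edges) h1
    have h2' := congrArg (fun p : G.Path t r => p.val.edges) h2
    have h3 := congrArg Walk.edges ((P h).val.take_spec hs)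
    rw [Walk.edges_append] at h3
    simp only at h1' h2'
    rw [h1', h2'] at h3
    rw [← h3]
    simp [Path.singleton, Sym2.eq_swap]
  · left
    have h1 : P t = ⟨Walk.cons hth (P h).val, (P h).2.cons hs⟩ :=
      (hG.isAcyclic.subsingleton_path t r).elim _ _
    rw [h1]
    simp

/-- The signed path matrix: `signedPath P tail v e` is `0` unless `e` lies on the path from `v` to
the root, in which case it is `1` if the tail of `e` is farther from the root than its head (that
is, if `e` lies on the path from its own tail) and `-1` otherwise. The root itself is allowed as a
row index; its row is zero. -/
noncomputable def signedPath {V : Type*} {G : SimpleGraph V} {r : V} (P : ∀ v : V, G.Path v r)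
    (tail : G.edgeSet → V) (v : V) (e : G.edgeSet) : ℂ :=
  if (e : Sym2 V) ∈ (P v).val.edges then
    (if (e : Sym2 V) ∈ (P (tail e)).val.edges then 1 else -1) else 0

lemma signedPath_root {V : Type*} {G : SimpleGraph V} {r : V} (P : ∀ v : V, G.Path v r)
    (tail : G.edgeSet → V) (e : G.edgeSet) : signedPath P tail r e = 0 := by
  have : (P r).val = Walk.nil := (Walk.isPath_iff_nil.mp (P r).2).eq_nil
  simp [signedPath, this]

lemma signedPath_mul_self {V : Type*} {G : SimpleGraph V} {r : V} (P : ∀ v : V, G.Path v r)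
    (tail : G.edgeSet → V) (v w : V) (e : G.edgeSet) :
    signedPath P tail v e * signedPath P tail w e =
      if (e : Sym2 V) ∈ (P v).val.edges ∧ (e : Sym2 V) ∈ (P w).val.edges then 1 else 0 := by
  unfold signedPath
  split_ifs <;> simp_all

lemma signedPath_tail_sub_head {V : Type*} {G : SimpleGraph V} (hG : G.IsTree) {r : V}
    (P : ∀ v : V, G.Path v r) (tail head : G.edgeSet → V)
    (hadj : ∀ e : G.edgeSet, G.Adj (tail e) (head e))
    (horient : ∀ e : G.edgeSet, (e : Sym2 V) = s(tail e, head e)) (e f : G.edgeSet) :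
    signedPath P tail (tail e) f - signedPath P tail (head e) f = if e = f then 1 else 0 := by
  have ht := (P (tail e)).2.isTrail.edges_nodup
  have hh := (P (head e)).2.isTrail.edges_nodup
  have hef : (f : Sym2 V) = e ↔ e = f := by rw [Subtype.coe_inj, eq_comm]
  rcases edges_path_of_adj hG P (hadj e) with h | h
  · rw [← horient e] at h
    have hn : (e : Sym2 V) ∉ (P (head e)).val.edges := by
      rw [h] at ht; exact (List.nodup_cons.mp ht).1
    by_cases hf : e = f
    · subst hf
      simp [signedPath, h, hn]
    · have : ¬ (f : Sym2 V) = e := fun h => hf (hef.mp h)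
      simp [signedPath, h, hf, this]
  · rw [← horient e] at h
    have hn : (e : Sym2 V) ∉ (P (tail e)).val.edges := by
      rw [h] at hh; exact (List.nodup_cons.mp hh).1
    by_cases hf : e = f
    · subst hf
      simp [signedPath, h, hn]
    · have : ¬ (f : Sym2 V) = e := fun h => hf (hef.mp h)
      simp [signedPath, h, hf, this]

/-- **Inverse of the multiphase weighted reduced Laplacian of a rooted tree.**
With `Â` the Kronecker product of the reduced oriented incidence matrix of a
finite rooted tree with the `d × d` identity, `D` the block-diagonal matrix of
invertible `d × d` line admittance matrices `y e`, and `Y = Âᵀ * D * Â`, the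
matrix `Z` whose `((i, φ), (j, ψ))` entry is the sum of the `(φ, ψ)` entries of
`(y e)⁻¹` over the edges `e` on the common portion of the unique paths from `i`
and from `j` to the root satisfies `Z * Y = 1` and `Y * Z = 1`; in particular
`Y` is invertible with `Y⁻¹ = Z`. -/
theorem multiphase_reduced_laplacian_inverse_common_path
    {V : Type*} [Fintype V] [DecidableEq V]
    (G : SimpleGraph V) (hG : G.IsTree) (r : V)
    [Fintype G.edgeSet]
    (tail head : G.edgeSet → V)
    (hadj : ∀ e : G.edgeSet, G.Adj (tail e) (head e))
    (horient : ∀ e : G.edgeSet, (e : Sym2 V) = s(tail e, head e))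
    (P : ∀ v : V, G.Path v r)
    (d : ℕ)
    (y : G.edgeSet → Matrix (Fin d) (Fin d) ℂ)
    (hy : ∀ e, IsUnit (y e))
    (A : Matrix G.edgeSet {v : V // v ≠ r} ℂ)
    (hA : ∀ (e : G.edgeSet) (v : {v : V // v ≠ r}),
      A e v = if (v : V) = tail e then 1 else if (v : V) = head e then -1 else 0)
    (Ahat : Matrix (G.edgeSet × Fin d) ({v : V // v ≠ r} × Fin d) ℂ)
    (hAhat : ∀ (e : G.edgeSet) (φ : Fin d) (v : {v : V // v ≠ r}) (ψ : Fin d),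
      Ahat (e, φ) (v, ψ) = if φ = ψ then A e v else 0)
    (D : Matrix (G.edgeSet × Fin d) (G.edgeSet × Fin d) ℂ)
    (hD : ∀ (e : G.edgeSet) (φ : Fin d) (f : G.edgeSet) (ψ : Fin d),
      D (e, φ) (f, ψ) = if e = f then y e φ ψ else 0)
    (Y : Matrix ({v : V // v ≠ r} × Fin d) ({v : V // v ≠ r} × Fin d) ℂ)
    (hY : Y = Ahatᵀ * D * Ahat)
    (Z : Matrix ({v : V // v ≠ r} × Fin d) ({v : V // v ≠ r} × Fin d) ℂ)
    (hZ : ∀ (i j : {v : V // v ≠ r}) (φ ψ : Fin d),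
      Z (i, φ) (j, ψ) = ∑ e : G.edgeSet,
        if (e : Sym2 V) ∈ (P (i : V)).val.edges ∧ (e : Sym2 V) ∈ (P (j : V)).val.edges
        then (y e)⁻¹ φ ψ else 0) :
    Z * Y = 1 ∧ Y * Z = 1 ∧ Y⁻¹ = Z := by
  obtain ⟨B, hB⟩ : ∃ B : Matrix {v : V // v ≠ r} G.edgeSet ℂ,
      ∀ v e, B v e = signedPath P tail v e := ⟨fun v e => signedPath P tail v e, fun _ _ => rfl⟩
  have hAB : A * B = 1 := by
    ext e f
    have hdiff : (1 : Matrix G.edgeSet G.edgeSet ℂ) e f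
        = signedPath P tail (tail e) f - signedPath P tail (head e) f := by
      rw [signedPath_tail_sub_head hG P tail head hadj horient e f, Matrix.one_apply]
      congr
    rw [Matrix.mul_apply, hdiff]
    -- The root row of `signedPath` vanishes, so the sum may be extended to all vertices.
    have hext : ∑ v : {v : V // v ≠ r}, A e v * B v f = ∑ v : V,
        (if v = tail e then 1 else if v = head e then -1 else 0) * signedPath P tail v f := by
      rw [← Fintype.sum_subtype_add_sum_subtype (fun v => v ≠ r)]
      rw [Finset.sum_congr rfl fun v _ => by rw [hA, hB], left_eq_add]
      refine Finset.sum_eq_zero fun v _ => ?_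
      rw [not_not.mp v.2, signedPath_root, mul_zero]
    rw [hext]
    have hne := (hadj e).ne
    have hsplit : ∀ v : V,
        (if v = tail e then (1 : ℂ) else if v = head e then -1 else 0) * signedPath P tail v f
        = (if v = tail e then signedPath P tail v f else 0)
          - (if v = head e then signedPath P tail v f else 0) := by
      intro v
      by_cases h1 : v = tail e
      · have h2 : v ≠ head e := h1 ▸ hne
        simp [h1, hne]
      · by_cases h2 : v = head e <;> simp [h1, h2, hne.symm]
    simp [hsplit, Finset.sum_sub_distrib]
  have hcard : Fintype.card G.edgeSet = Fintype.card {v : V // v ≠ r} := by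
    have h1 := hG.card_edgeFinset
    rw [← SimpleGraph.edgeFinset_card, Fintype.card_subtype_compl, Fintype.card_subtype_eq]
    omega
  have hBA : B * A = 1 := (Matrix.mul_eq_one_comm_of_card_eq _ _ _ hcard).mp hAB
  have hAk : Ahat = Matrix.kronecker A (1 : Matrix (Fin d) (Fin d) ℂ) := by
    ext ⟨e, φ⟩ ⟨v, ψ⟩
    simp [hAhat, Matrix.one_apply]
  obtain ⟨Bk, hBk⟩ : ∃ Bk, Bk = Matrix.kronecker B (1 : Matrix (Fin d) (Fin d) ℂ) := ⟨_, rfl⟩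
  have hABk : Ahat * Bk = 1 := by
    rw [hAk, hBk]
    unfold Matrix.kronecker
    rw [← Matrix.mul_kronecker_mul, hAB, Matrix.mul_one,
      Matrix.one_kronecker_one]
  have hBAk : Bk * Ahat = 1 := by
    rw [hAk, hBk]
    unfold Matrix.kronecker
    rw [← Matrix.mul_kronecker_mul, hBA, Matrix.mul_one,
      Matrix.one_kronecker_one]
  obtain ⟨D', hD'⟩ : ∃ D' : Matrix (G.edgeSet × Fin d) (G.edgeSet × Fin d) ℂ,
      ∀ e φ f ψ, D' (e, φ) (f, ψ) = if e = f then (y e)⁻¹ φ ψ else 0 :=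
    ⟨fun p q => if p.1 = q.1 then (y p.1)⁻¹ p.2 q.2 else 0, fun _ _ _ _ => rfl⟩
  have hDD : D * D' = 1 := by
    ext ⟨e, φ⟩ ⟨f, ψ⟩
    rw [Matrix.mul_apply, Fintype.sum_prod_type]
    simp only [hD, hD', ite_mul, zero_mul, mul_ite, mul_zero]
    rw [Finset.sum_eq_single e (by intro b _ hb; simp [Ne.symm hb]) (by simp)]
    by_cases hef : e = f
    · subst hef
      have h1 := congrFun (congrFun
        (Matrix.mul_nonsing_inv (y e) ((Matrix.isUnit_iff_isUnit_det _).mp (hy e))) φ) ψ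
      rw [Matrix.mul_apply] at h1
      simp [h1, Matrix.one_apply]
    · simp [hef]
  have hZB : Z = Bk * D' * Bkᵀ := by
    ext ⟨i, φ⟩ ⟨j, ψ⟩
    rw [hZ, Matrix.mul_apply, Fintype.sum_prod_type]
    refine Finset.sum_congr rfl fun e _ => ?_
    have h1 : ∀ χ, (Bk * D') (i, φ) (e, χ) = B i e * (y e)⁻¹ φ χ := by
      intro χ
      rw [Matrix.mul_apply, Fintype.sum_prod_type]
      simp [hBk, hD', Matrix.one_apply]
    have h2 : ∀ χ, Bkᵀ (e, χ) (j, ψ) = if ψ = χ then B j e else 0 := by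
      intro χ
      simp [hBk, Matrix.one_apply]
    have h3 := signedPath_mul_self P tail i j e
    rw [← hB, ← hB] at h3
    simp only [h1, h2, mul_ite, mul_zero, Finset.sum_ite_eq, Finset.mem_univ, if_true]
    rw [mul_right_comm, h3, ite_mul, one_mul, zero_mul]
    congr
  have hYZ : Y * Z = 1 := by
    calc Y * Z = Ahatᵀ * (D * ((Ahat * Bk) * D')) * Bkᵀ := by
          rw [hY, hZB]; simp only [Matrix.mul_assoc]
      _ = (Bk * Ahat)ᵀ := by
          rw [hABk, Matrix.one_mul, hDD, Matrix.mul_one, Matrix.transpose_mul]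
      _ = 1 := by rw [hBAk, Matrix.transpose_one]
  exact ⟨_root_.mul_eq_one_comm.mp hYZ, hYZ, Matrix.inv_eq_right_inv hYZ⟩
end

section
/- Let n be a natural number, let E : Fin n → ℂ with E k ≠ 0 for all k, let Z be an n × n complex matrix, let p, q : Fin n → ℝ, and set S k = p k + i * q k. Define M(i, k) = 2 * Re(E i * conj(Z(i, k)) / E k), N(i, k) = −2 * Im(E i * conj(Z(i, k)) / E k), w i = Σ_k Z(i, k) * conj(S k) / conj(E k), v̂ i = ‖E i‖² + Σ_k ( M(i, k) * p k + N(i, k) * q k ), and ṽ i = ‖E i + w i‖². Then for every i, v̂ i ≤ ṽ i. -/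
open Complex

/-- **GLDF underestimates FPL at zero-injection linearization.**
With open-circuit voltages `E`, impedance matrix `Z`, injections `S = p + i q`,
the GLDF squared voltage magnitude prediction
`v̂ i = ‖E i‖² + Σ_k (M i k * p k + N i k * q k)` is bounded above by the FPL
squared voltage magnitude prediction `ṽ i = ‖E i + w i‖²`. -/
theorem gldf_le_fpl_sq_magnitude
    (n : ℕ) (E : Fin n → ℂ) (hE : ∀ k, E k ≠ 0)
    (Z : Matrix (Fin n) (Fin n) ℂ)
    (p q : Fin n → ℝ) (S : Fin n → ℂ)
    (hS : ∀ k, S k = (p k : ℂ) + Complex.I * (q k : ℂ))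
    (M N : Matrix (Fin n) (Fin n) ℝ)
    (hM : ∀ i k, M i k = 2 * (E i * (starRingEnd ℂ) (Z i k) / E k).re)
    (hN : ∀ i k, N i k = -2 * (E i * (starRingEnd ℂ) (Z i k) / E k).im)
    (w : Fin n → ℂ)
    (hw : ∀ i, w i = ∑ k, Z i k * (starRingEnd ℂ) (S k) / (starRingEnd ℂ) (E k))
    (vhat : Fin n → ℝ)
    (hvhat : ∀ i, vhat i = ‖E i‖ ^ 2 + ∑ k, (M i k * p k + N i k * q k))
    (vtil : Fin n → ℝ)
    (hvtil : ∀ i, vtil i = ‖E i + w i‖ ^ 2) :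
    ∀ i, vhat i ≤ vtil i := by
  intro i
  -- The linear term of `vhat` is the cross term `2 Re (E i * conj (w i))` of `‖E i + w i‖ ^ 2`.
  have hcross : ∑ k, (M i k * p k + N i k * q k) = 2 * (E i * (starRingEnd ℂ) (w i)).re := by
    rw [hw, map_sum, Finset.mul_sum, Complex.re_sum, Finset.mul_sum]
    refine Finset.sum_congr rfl fun k _ => ?_
    have hterm : E i * (starRingEnd ℂ) (Z i k * (starRingEnd ℂ) (S k) / (starRingEnd ℂ) (E k))
        = E i * (starRingEnd ℂ) (Z i k) / E k * S k := by
      simp only [map_div₀, map_mul, Complex.conj_conj]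
      ring
    have hre : (S k).re = p k := by simp [hS]
    have him : (S k).im = q k := by simp [hS]
    rw [hterm, Complex.mul_re, hre, him, hM, hN]
    ring
  -- Hence `vtil i - vhat i = ‖w i‖ ^ 2`.
  rw [hvhat, hvtil, hcross, Complex.sq_norm, Complex.sq_norm, Complex.normSq_add]
  linarith [Complex.normSq_nonneg (w i)]
end

section
/- Let n be a natural number, let E : Fin n → ℂ with E k ≠ 0 for all k, let Z be an n × n complex matrix, let p, q : Fin n → ℝ, and set S k = p k + i * q k. Define M(i, k) = 2 * Re(E i * conj(Z(i, k)) / E k), N(i, k) = −2 * Im(E i * conj(Z(i, k)) / E k), w i = Σ_k Z(i, k) * conj(S k) / conj(E k), v̂ i = ‖E i‖² + Σ_k ( M(i, k) * p k + N(i, k) * q k ), and ṽ i = ‖E i + w i‖². Let v : Fin n → ℝ and suppose v i ≤ v̂ i for all i. Then |v̂ i − v i| ≤ |ṽ i − v i| for all i. -/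
/-!
The GLDF estimate is the first-order part of the FPL estimate: expanding
`‖E i + w i‖ ^ 2 = ‖E i‖ ^ 2 + 2 Re (E i * conj (w i)) + ‖w i‖ ^ 2`, the cross term is exactly
`∑ k, (M i k * p k + N i k * q k)`, so `ṽ i = v̂ i + ‖w i‖ ^ 2`. Hence `v i ≤ v̂ i ≤ ṽ i`, and the
smaller overestimate has the smaller error.
-/

open Complex

/-- **GLDF dominates FPL in accuracy at zero-injection linearization.**
If the true squared voltage magnitudes `v` satisfy `v i ≤ v̂ i` (the LinDistFlow
overestimation property, valid for radial networks), then the GLDF prediction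
`v̂` is at least as accurate as the FPL prediction `ṽ` at every node:
`|v̂ i − v i| ≤ |ṽ i − v i|`. -/
theorem gldf_error_le_fpl_error
    (n : ℕ) (E : Fin n → ℂ) (hE : ∀ k, E k ≠ 0)
    (Z : Matrix (Fin n) (Fin n) ℂ)
    (p q : Fin n → ℝ) (S : Fin n → ℂ)
    (hS : ∀ k, S k = (p k : ℂ) + Complex.I * (q k : ℂ))
    (M N : Matrix (Fin n) (Fin n) ℝ)
    (hM : ∀ i k, M i k = 2 * (E i * (starRingEnd ℂ) (Z i k) / E k).re)
    (hN : ∀ i k, N i k = -2 * (E i * (starRingEnd ℂ) (Z i k) / E k).im)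
    (w : Fin n → ℂ)
    (hw : ∀ i, w i = ∑ k, Z i k * (starRingEnd ℂ) (S k) / (starRingEnd ℂ) (E k))
    (vhat : Fin n → ℝ)
    (hvhat : ∀ i, vhat i = ‖E i‖ ^ 2 + ∑ k, (M i k * p k + N i k * q k))
    (vtil : Fin n → ℝ)
    (hvtil : ∀ i, vtil i = ‖E i + w i‖ ^ 2)
    (v : Fin n → ℝ) (hv : ∀ i, v i ≤ vhat i) :
    ∀ i, |vhat i - v i| ≤ |vtil i - v i| := by
  intro i
  -- The GLDF correction is the cross term of `‖E i + w i‖ ^ 2`.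
  have hcross : ∑ k, (M i k * p k + N i k * q k)
      = 2 * (E i * (starRingEnd ℂ) (w i)).re := by
    rw [hw, map_sum, Finset.mul_sum, Complex.re_sum, Finset.mul_sum]
    refine Finset.sum_congr rfl fun k _ => ?_
    have hterm : E i * (starRingEnd ℂ) (Z i k * (starRingEnd ℂ) (S k) / (starRingEnd ℂ) (E k))
        = (E i * (starRingEnd ℂ) (Z i k) / E k) * S k := by
      simp only [map_div₀, map_mul, Complex.conj_conj]
      ring
    rw [hterm, hM, hN, hS, Complex.mul_re]
    simp
    ring
  have hgap : vtil i = vhat i + ‖w i‖ ^ 2 := by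
    rw [hvtil, hvhat, hcross, ← Complex.normSq_eq_norm_sq, ← Complex.normSq_eq_norm_sq,
      ← Complex.normSq_eq_norm_sq, Complex.normSq_add]
    ring
  have hnonneg : 0 ≤ vhat i - v i := sub_nonneg.mpr (hv i)
  have hle : vhat i - v i ≤ vtil i - v i := by
    rw [hgap]
    linarith [sq_nonneg ‖w i‖]
  exact abs_le_abs_of_nonneg hnonneg hle
end
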